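/- Let p be an odd prime and A a finite nonempty symmetric subset of Aff(F_p), and set K := |A³|/|A|. Then either (i) A ⊆ Stab(x) for some x ∈ F_p, or both of the following hold: (ii) if |A| ≤ 2p then |π(A)| ≤ 2K⁴; and (iii) if |A| > 4p then |π(A)| ≤ 2K³·|A|/p and {(1,t) : t ∈ F_p} ⊆ A⁸. -/

import Mathlib

open Pointwise

/-- The affine group `Aff(F)`: pairs `(a, b) ∈ F* × F` acting as `x ↦ a·x + b`,
with multiplication `(a,b)·(c,d) = (ac, ad + b)` and identity `(1, 0)`. -/
@[ext]
structure Aff (F : Type*) [Field F] where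
  a : Fˣ
  b : F
deriving DecidableEq

namespace Aff

variable {F : Type*} [Field F]

instance : Mul (Aff F) := ⟨fun g h => ⟨g.a * h.a, (g.a : F) * h.b + g.b⟩⟩
instance : One (Aff F) := ⟨⟨1, 0⟩⟩
instance : Inv (Aff F) := ⟨fun g => ⟨g.a⁻¹, -(((g.a⁻¹ : Fˣ) : F) * g.b)⟩⟩

@[simp] lemma mul_a (g h : Aff F) : (g * h).a = g.a * h.a := rfl
@[simp] lemma mul_b (g h : Aff F) : (g * h).b = (g.a : F) * h.b + g.b := rfl
@[simp] lemma one_a : (1 : Aff F).a = 1 := rfl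
@[simp] lemma one_b : (1 : Aff F).b = 0 := rfl
@[simp] lemma inv_a (g : Aff F) : (g⁻¹).a = g.a⁻¹ := rfl
@[simp] lemma inv_b (g : Aff F) : (g⁻¹).b = -(((g.a⁻¹ : Fˣ) : F) * g.b) := rfl

instance : Group (Aff F) where
  mul_assoc g h k := by
    ext
    · simp [mul_assoc]
    · simp [mul_add, mul_assoc, add_assoc]
  one_mul g := by ext <;> simp
  mul_one g := by ext <;> simp
  inv_mul_cancel g := by
    ext
    · simp
    · simp

end Aff

/-!
Suppose two elements of `A` agree at `x`. Then some `u ∈ A²`, `u ≠ 1`, fixes `x`, and conjugating it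
by `A` gives in `A⁴` the homotheties with the ratio of `u` centred at all points of the orbit
`A • x`. Multiplying them by elements of `A` with distinct slopes gives
`|A • x| |π(A)| ≤ |A⁵| ≤ K³ |A|`.

It remains to find such an `x` with a large orbit. Distinct affine maps agree in at most one point,
so by Cauchy–Schwarz some `x` in a set `D` has an orbit of size at least
`|A| |D| / (|A| + |D|)`. If `|A| > |F|`, every point is a collision point and `D = F` will do; more
than half of `F` is then a centre, and quotients of homotheties with the same ratio yield all
translations. If `|A| ≤ p`, take for `D` the set of all collision points. Viewing `ax + b` as the
point `(a, b)` of the plane, these are the directions determined by `A`, and Szőnyi's theorem,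
proved by reducing `X ^ |F|` modulo the Rédei polynomial of `A`, gives `2 |D| > |A|`, so
`3 |A • x| ≥ |A|`.

This yields `|π(A)| ≤ 3K³ ≤ 2K⁴` as long as `K ≥ 3/2`. For `K < 3/2`, Freiman's theorem makes `A²` a
subgroup: either it contains enough translations, or the elements of `A` commute.
-/

section Polynomial

open Polynomial

section TotalDegree

variable {R : Type*}

/-- The bivariate polynomial `P` (the outer variable being `X`, the inner one `Y`) has total degree
at most `n`. -/
def HasTotalDegreeLE [Semiring R] (P : R[X][X]) (n : ℕ) : Prop :=
  ∀ i j, n < i + j → (P.coeff i).coeff j = 0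

namespace HasTotalDegreeLE

lemma mul [Semiring R] {P Q : R[X][X]} {m n : ℕ} (hP : HasTotalDegreeLE P m)
    (hQ : HasTotalDegreeLE Q n) : HasTotalDegreeLE (P * Q) (m + n) := by
  intro i j hij
  rw [coeff_mul, finsetSum_coeff]
  refine Finset.sum_eq_zero fun u hu => ?_
  rw [coeff_mul]
  refine Finset.sum_eq_zero fun v hv => ?_
  rw [Finset.HasAntidiagonal.mem_antidiagonal] at hu hv
  by_cases hlt : m < u.1 + v.1
  · rw [hP _ _ hlt, zero_mul]
  · rw [hQ _ _ (by omega), mul_zero]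

lemma sub [Ring R] {P Q : R[X][X]} {n : ℕ} (hP : HasTotalDegreeLE P n)
    (hQ : HasTotalDegreeLE Q n) : HasTotalDegreeLE (P - Q) n := by
  intro i j hij
  rw [coeff_sub, coeff_sub, hP i j hij, hQ i j hij, sub_zero]

lemma natDegree_coeff_le [Semiring R] {P : R[X][X]} {n : ℕ} (hP : HasTotalDegreeLE P n) (i : ℕ) :
    (P.coeff i).natDegree ≤ n - i :=
  natDegree_le_iff_coeff_eq_zero.2 fun j hj => hP i j (by omega)

lemma coeff_eq_zero [Semiring R] {P : R[X][X]} {n i : ℕ} (hP : HasTotalDegreeLE P n)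
    (hi : n < i) : P.coeff i = 0 :=
  Polynomial.ext fun j => by rw [hP i j (by omega), coeff_zero]

end HasTotalDegreeLE

lemma hasTotalDegreeLE_C [Semiring R] {f : R[X]} {n : ℕ} (hf : f.natDegree ≤ n) :
    HasTotalDegreeLE (C f) n := by
  intro i j hij
  rw [coeff_C]
  split_ifs with hi
  · exact coeff_eq_zero_of_natDegree_lt (by omega)
  · exact coeff_zero j

lemma hasTotalDegreeLE_X [Semiring R] : HasTotalDegreeLE (X : R[X][X]) 1 := by
  intro i j hij
  rw [coeff_X]
  split_ifs with hi
  · rw [coeff_one, if_neg (by omega)]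
  · exact coeff_zero j

lemma X_mul_modByMonic [CommRing R] {P r : R[X]} (hP : P.Monic) (hr : r.degree < P.degree) :
    (X * r) %ₘ P = X * r - C (r.coeff (P.natDegree - 1)) * P := by
  nontriviality R
  have hdvd : P ∣ X * r - (X * r - C (r.coeff (P.natDegree - 1)) * P) :=
    ⟨C (r.coeff (P.natDegree - 1)), by ring⟩
  rw [modByMonic_eq_of_dvd_sub hP hdvd, modByMonic_eq_self_iff hP, degree_eq_natDegree hP.ne_zero,
    degree_lt_iff_coeff_zero]
  have hr' : ∀ i, P.natDegree ≤ i → r.coeff i = 0 := by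
    rwa [← degree_lt_iff_coeff_zero, ← degree_eq_natDegree hP.ne_zero]
  rintro (_ | i) hi
  · have hr0 : r.coeff (P.natDegree - 1) = 0 := hr' _ (by omega)
    simp [hr0]
  rw [coeff_sub, coeff_X_mul, coeff_C_mul]
  obtain hik | hik := hi.eq_or_lt
  · rw [← hik, hP.coeff_natDegree, mul_one, hik, Nat.add_sub_cancel, sub_self]
  · rw [hr' i (by omega), coeff_eq_zero_of_natDegree_lt hik, mul_zero, sub_zero]

lemma hasTotalDegreeLE_X_pow_modByMonic [CommRing R] [Nontrivial R] {P : R[X][X]} (hP : P.Monic)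
    (hPdeg : HasTotalDegreeLE P P.natDegree) (n : ℕ) : HasTotalDegreeLE (X ^ n %ₘ P) n := by
  induction n with
  | zero =>
    by_cases hP1 : P = 1
    · simp [hP1, HasTotalDegreeLE]
    · have : (1 : R[X][X]) %ₘ P = 1 := by
        rw [modByMonic_eq_self_iff hP, degree_one]
        exact hP.degree_pos.2 hP1
      rw [pow_zero, this]
      exact hasTotalDegreeLE_C natDegree_one.le
  | succ n ih =>
    set r := X ^ n %ₘ P
    have hstep : X ^ (n + 1) %ₘ P = X * r - C (r.coeff (P.natDegree - 1)) * P := by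
      rw [pow_succ', ← X_mul_modByMonic hP (degree_modByMonic_lt _ hP), eq_comm]
      refine modByMonic_eq_of_dvd_sub hP ?_
      rw [← mul_sub]
      exact (dvd_modByMonic_sub _ P).mul_left X
    rw [hstep]
    refine .sub (add_comm n 1 ▸ hasTotalDegreeLE_X.mul ih) fun i j hij => ?_
    rw [coeff_C_mul, coeff_mul]
    refine Finset.sum_eq_zero fun v hv => ?_
    rw [Finset.HasAntidiagonal.mem_antidiagonal] at hv
    by_cases hlt : n < P.natDegree - 1 + v.1
    · rw [ih _ _ hlt, zero_mul]
    · rw [hPdeg _ _ (by omega), mul_zero]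

end TotalDegree

section Redei

/-- The Rédei polynomial `∏ (X - f(Y))` of a multiset of polynomials `f`. When every `f = aY + b` is
affine, its specialisation at `Y = y` records the projections of the points `(a, b)` in the
direction `y`. -/
noncomputable def redeiPoly {R : Type*} [CommRing R] (m : Multiset R[X]) : R[X][X] :=
  (m.map fun f => X - C f).prod

section CommRing

variable {R : Type*} [CommRing R] (m : Multiset R[X])

lemma monic_redeiPoly : (redeiPoly m).Monic :=
  monic_multisetProd_X_sub_C m

lemma map_evalRingHom_redeiPoly (y : R) :
    (redeiPoly m).map (evalRingHom y) = ((m.map (eval y)).map fun a => X - C a).prod := by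
  simp [redeiPoly, Polynomial.map_multiset_prod]

lemma map_X_pow_modByMonic_redeiPoly (n : ℕ) (y : R) :
    (X ^ n %ₘ redeiPoly m).map (evalRingHom y) =
      X ^ n %ₘ ((m.map (eval y)).map fun a => X - C a).prod := by
  rw [map_modByMonic _ (monic_redeiPoly m), map_evalRingHom_redeiPoly, Polynomial.map_pow, map_X]

variable {m}

lemma hasTotalDegreeLE_redeiPoly (hm : ∀ f ∈ m, f.natDegree ≤ 1) :
    HasTotalDegreeLE (redeiPoly m) m.card := by
  induction m using Multiset.induction with
  | empty => simpa [redeiPoly] using hasTotalDegreeLE_C (R := R) natDegree_one.le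
  | cons f m ih =>
    rw [redeiPoly, Multiset.map_cons, Multiset.prod_cons, Multiset.card_cons, add_comm]
    exact (hasTotalDegreeLE_X.sub (hasTotalDegreeLE_C (hm f (Multiset.mem_cons_self f m)))).mul
      (ih fun g hg => hm g (Multiset.mem_cons_of_mem hg))

lemma hasTotalDegreeLE_X_pow_modByMonic_redeiPoly [Nontrivial R]
    (hm : ∀ f ∈ m, f.natDegree ≤ 1) (n : ℕ) :
    HasTotalDegreeLE (X ^ n %ₘ redeiPoly m) n := by
  refine hasTotalDegreeLE_X_pow_modByMonic (monic_redeiPoly m) ?_ n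
  rw [redeiPoly, natDegree_multiset_prod_X_sub_C_eq_card]
  exact hasTotalDegreeLE_redeiPoly hm

end CommRing

lemma derivative_ne_zero_of_natDegree_lt {R : Type*} [Semiring R] [NoZeroDivisors R] {p : ℕ}
    [CharP R p] {f : R[X]} (hpos : 0 < f.natDegree) (hlt : f.natDegree < p) :
    derivative f ≠ 0 := by
  intro hzero
  have hcoeff : f.leadingCoeff * (f.natDegree : R) = 0 := by
    have := coeff_derivative f (f.natDegree - 1)
    rwa [hzero, coeff_zero, ← Nat.cast_add_one, Nat.sub_add_cancel hpos, eq_comm] at this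
  obtain hlead | hdeg := mul_eq_zero.1 hcoeff
  · rw [leadingCoeff_eq_zero.1 hlead, natDegree_zero] at hpos
    exact hpos.false
  · exact Nat.not_dvd_of_pos_of_lt hpos hlt ((CharP.cast_eq_zero_iff R p _).1 hdeg)

section FiniteField

variable {F : Type*} [Field F] [Fintype F]

lemma prod_X_sub_C_dvd_X_pow_card_sub_X_iff {s : Multiset F} :
    (s.map fun a => X - C a).prod ∣ X ^ Fintype.card F - X ↔ s.Nodup := by
  rw [Multiset.prod_X_sub_C_dvd_iff_le_roots
    (FiniteField.X_pow_card_sub_X_ne_zero F Fintype.one_lt_card),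
    FiniteField.roots_X_pow_card_sub_X]
  exact ⟨fun hle => Multiset.nodup_of_le hle Finset.univ.nodup,
    fun hs => (Multiset.le_iff_subset hs).2 fun a _ => Finset.mem_univ a⟩

lemma X_pow_card_modByMonic_prod_X_sub_C {s : Multiset F} (hs : s.Nodup) (hcard : 1 < s.card) :
    X ^ Fintype.card F %ₘ (s.map fun a => X - C a).prod = X := by
  have hmonic : (s.map fun a => X - C a).prod.Monic := monic_multisetProd_X_sub_C s
  rw [modByMonic_eq_of_dvd_sub hmonic (prod_X_sub_C_dvd_X_pow_card_sub_X_iff.2 hs),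
    modByMonic_eq_self_iff hmonic, degree_X, degree_eq_natDegree hmonic.ne_zero,
    natDegree_multiset_prod_X_sub_C_eq_card]
  exact_mod_cast hcard

lemma coeff_X_pow_card_modByMonic_redeiPoly_eq_zero {m : Multiset F[X]} {D : Finset F} {i : ℕ}
    (hm : ∀ f ∈ m, f.natDegree ≤ 1) (hcard : 1 < m.card)
    (hD : ∀ y ∉ D, (m.map (eval y)).Nodup) (hi : 1 < i) (hDi : D.card < i) :
    (X ^ Fintype.card F %ₘ redeiPoly m).coeff i = 0 := by
  classical
  set r := X ^ Fintype.card F %ₘ redeiPoly m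
  have hr : HasTotalDegreeLE r (Fintype.card F) := hasTotalDegreeLE_X_pow_modByMonic_redeiPoly hm _
  obtain hFi | hiF := lt_or_ge (Fintype.card F) i
  · exact hr.coeff_eq_zero hFi
  refine eq_zero_of_natDegree_lt_card_of_eval_eq_zero' _ Dᶜ (fun y hy => ?_) ?_
  · have hry : r.map (evalRingHom y) = X := by
      rw [map_X_pow_modByMonic_redeiPoly]
      exact X_pow_card_modByMonic_prod_X_sub_C (hD y (Finset.mem_compl.1 hy))
        (by rwa [Multiset.card_map])
    rw [← coe_evalRingHom, ← coeff_map, hry, coeff_X_of_ne_one hi.ne']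
  · have := hr.natDegree_coeff_le i
    have hDF := D.card_le_univ
    rw [Finset.card_compl]
    omega

lemma natDegree_X_pow_card_modByMonic_le {m : Multiset F[X]} {D : Finset F}
    (hm : ∀ f ∈ m, f.natDegree ≤ 1) (hcard : 1 < m.card)
    (hD : ∀ y ∉ D, (m.map (eval y)).Nodup) (hDne : D.Nonempty) (x : F) :
    (X ^ Fintype.card F %ₘ ((m.map (eval x)).map fun a => X - C a).prod).natDegree ≤ D.card := by
  rw [natDegree_le_iff_coeff_eq_zero]
  intro i hi
  rw [← map_X_pow_modByMonic_redeiPoly, coeff_map,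
    coeff_X_pow_card_modByMonic_redeiPoly_eq_zero hm hcard hD (Nat.lt_of_le_of_lt hDne.card_pos hi)
      hi, map_zero]

-- As `X ^ q` has derivative zero, a root `c` of `X ^ q - g` of multiplicity `k` is a root of the
-- derivative of `g` of multiplicity at least `k - 1`; and `c ^ q = c` makes it a root of `X - g`.
lemma prod_X_sub_C_dvd_X_sub_mul_derivative {s : Multiset F} {g : F[X]}
    (hdvd : (s.map fun a => X - C a).prod ∣ X ^ Fintype.card F - g) :
    (s.map fun a => X - C a).prod ∣ (X - g) * derivative g := by
  classical
  set S := (s.map fun a => X - C a).prod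
  obtain hzero | hne := eq_or_ne ((X - g) * derivative g) 0
  · exact hzero ▸ dvd_zero S
  have hX := left_ne_zero_of_mul hne
  have hderiv := right_ne_zero_of_mul hne
  rw [Multiset.prod_X_sub_C_dvd_iff_le_roots hne, Multiset.le_iff_count]
  intro c
  obtain hc | hc := Nat.eq_zero_or_pos (s.count c)
  · exact hc ▸ Nat.zero_le _
  have hpow : (X - C c) ^ s.count c ∣ X ^ Fintype.card F - g := by
    refine Dvd.dvd.trans ?_ hdvd
    rw [← roots_multiset_prod_X_sub_C s, count_roots]
    exact pow_rootMultiplicity_dvd S c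
  have hroot : IsRoot (X - g) c := by
    have := dvd_iff_isRoot.1 ((dvd_pow_self _ hc.ne').trans hpow)
    simpa [IsRoot, FiniteField.pow_card] using this
  have hderiv_dvd : (X - C c) ^ (s.count c - 1) ∣ derivative g := by
    simpa [derivative_X_pow] using pow_sub_one_dvd_derivative_of_pow_dvd hpow
  have hsimple := (rootMultiplicity_pos hX).2 hroot
  have hmult := (le_rootMultiplicity_iff hderiv).2 hderiv_dvd
  rw [count_roots, rootMultiplicity_mul hne]
  omega

lemma eval_X_pow_card_modByMonic_prod_X_sub_C {s : Multiset F} {a : F} (ha : a ∈ s) :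
    (X ^ Fintype.card F %ₘ (s.map fun a => X - C a).prod).eval a = a := by
  have hdvd : X - C a ∣ (s.map fun a => X - C a).prod :=
    Multiset.dvd_prod (Multiset.mem_map_of_mem _ ha)
  have hroot := dvd_iff_isRoot.1 (hdvd.trans (dvd_modByMonic_sub (X ^ Fintype.card F) _))
  rwa [IsRoot, eval_sub, eval_pow, eval_X, FiniteField.pow_card, sub_eq_zero] at hroot

lemma card_lt_two_mul_natDegree_X_pow_card_modByMonic {p : ℕ} [CharP F p] {s : Multiset F}
    (hcard : s.card ≤ p) (hdup : ¬ s.Nodup) (hconst : ∃ a ∈ s, ∃ b ∈ s, a ≠ b) :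
    s.card < 2 * (X ^ Fintype.card F %ₘ (s.map fun a => X - C a).prod).natDegree := by
  set S := (s.map fun a => X - C a).prod
  set g := X ^ Fintype.card F %ₘ S
  have hSdeg : S.natDegree = s.card := natDegree_multiset_prod_X_sub_C_eq_card s
  have hdvd : S ∣ X ^ Fintype.card F - g := dvd_sub_comm.1 (dvd_modByMonic_sub _ S)
  have hpos : 0 < g.natDegree := by
    by_contra hzero
    obtain ⟨a, ha, b, hb, hab⟩ := hconst
    have hgC : g = C (g.coeff 0) := eq_C_of_natDegree_eq_zero (by omega)
    have heval : ∀ c ∈ s, g.coeff 0 = c := fun c hc => by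
      rw [← eval_C (x := c) (a := g.coeff 0), ← hgC, eval_X_pow_card_modByMonic_prod_X_sub_C hc]
    exact hab ((heval a ha).symm.trans (heval b hb))
  have hlt : g.natDegree < p := by
    have hS1 : S ≠ 1 := fun hS1 => hpos.ne' (by simp [g, hS1])
    exact ((natDegree_modByMonic_lt _ (monic_multisetProd_X_sub_C s) hS1).trans_eq
      hSdeg).trans_le hcard
  have hderiv : derivative g ≠ 0 := derivative_ne_zero_of_natDegree_lt hpos hlt
  have hX : X - g ≠ 0 := by
    intro hX
    rw [← sub_eq_zero.1 hX] at hdvd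
    exact hdup (prod_X_sub_C_dvd_X_pow_card_sub_X_iff.1 hdvd)
  calc s.card = S.natDegree := hSdeg.symm
    _ ≤ ((X - g) * derivative g).natDegree :=
        natDegree_le_of_dvd (prod_X_sub_C_dvd_X_sub_mul_derivative hdvd) (mul_ne_zero hX hderiv)
    _ = (X - g).natDegree + (derivative g).natDegree := natDegree_mul hX hderiv
    _ < g.natDegree + g.natDegree := add_lt_add_of_le_of_lt
        ((natDegree_sub_le _ _).trans (by rw [natDegree_X]; omega))
        (natDegree_derivative_lt hpos.ne')
    _ = 2 * g.natDegree := (two_mul _).symm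

end FiniteField

theorem card_lt_two_mul_card_of_nodup_map_eval {F : Type*} [Field F] [Finite F] {p : ℕ} [CharP F p]
    {m : Multiset F[X]}
    (hm : ∀ f ∈ m, f.natDegree ≤ 1) (hcard : m.card ≤ p) {D : Finset F}
    (hD : ∀ y ∉ D, (m.map (eval y)).Nodup) {x : F} (hx : ¬ (m.map (eval x)).Nodup)
    (hconst : ∃ f ∈ m, ∃ g ∈ m, f.eval x ≠ g.eval x) :
    m.card < 2 * D.card := by
  have := Fintype.ofFinite F
  have hxD : x ∈ D := by_contra fun hxD => hx (hD x hxD)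
  obtain ⟨f, hf, g, hg, hfg⟩ := hconst
  have hone : 1 < m.card := by
    by_contra hle
    obtain ⟨f', rfl⟩ := Multiset.card_eq_one.1
      (le_antisymm (not_lt.1 hle) (Multiset.card_pos_iff_exists_mem.2 ⟨f, hf⟩))
    exact hx (Multiset.nodup_singleton _)
  have hlower := card_lt_two_mul_natDegree_X_pow_card_modByMonic (s := m.map (eval x))
    (by rwa [Multiset.card_map]) hx
    ⟨_, Multiset.mem_map_of_mem _ hf, _, Multiset.mem_map_of_mem _ hg, hfg⟩
  rw [Multiset.card_map] at hlower
  exact hlower.trans_le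
    (Nat.mul_le_mul_left 2 (natDegree_X_pow_card_modByMonic_le hm hone hD ⟨x, hxD⟩ x))

end Redei

end Polynomial

section Counting

open Finset

variable {ι X Y : Type*} [DecidableEq Y]

lemma sum_sq_card_fiber_eq (f : ι → Y) (A : Finset ι) :
    ∑ y ∈ A.image f, #{g ∈ A | f g = y} ^ 2 = #A + #{q ∈ A.offDiag | f q.1 = f q.2} := by
  classical
  have hdiag : #{q ∈ A.diag | f q.1 = f q.2} = #A := by
    rw [filter_true_of_mem fun q hq => by rw [(mem_diag.1 hq).2], diag_card]
  have hpairs : #{q ∈ A ×ˢ A | f q.1 = f q.2} = #A + #{q ∈ A.offDiag | f q.1 = f q.2} := by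
    rw [← diag_union_offDiag, filter_union,
      card_union_of_disjoint (disjoint_filter_filter A.disjoint_diag_offDiag), hdiag]
  rw [← hpairs, card_eq_sum_card_fiberwise (f := fun q => f q.1) (t := A.image f)
    fun q hq => mem_image_of_mem f (mem_product.1 (mem_filter.1 hq).1).1]
  refine sum_congr rfl fun y _ => ?_
  rw [sq, ← card_product]
  congr 1
  ext q
  simp only [mem_product, mem_filter]
  grind

lemma sq_card_le_card_image_mul (f : ι → Y) (A : Finset ι) :
    #A ^ 2 ≤ #(A.image f) * (#A + #{q ∈ A.offDiag | f q.1 = f q.2}) := by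
  rw [← sum_sq_card_fiber_eq]
  nth_rewrite 1 [card_eq_sum_card_image f A]
  exact sq_sum_le_card_mul_sum_sq

lemma sum_card_offDiag_filter_le {f : ι → X → Y} {A : Finset ι} {D : Finset X}
    (hf : ∀ g ∈ A, ∀ h ∈ A, g ≠ h → ∀ x ∈ D, ∀ y ∈ D, f g x = f h x → f g y = f h y → x = y) :
    ∑ x ∈ D, #{q ∈ A.offDiag | f q.1 x = f q.2 x} ≤ #A ^ 2 := by
  calc ∑ x ∈ D, #{q ∈ A.offDiag | f q.1 x = f q.2 x}
      = ∑ q ∈ A.offDiag, #{x ∈ D | f q.1 x = f q.2 x} :=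
        sum_card_bipartiteAbove_eq_sum_card_bipartiteBelow (fun x (q : ι × ι) => f q.1 x = f q.2 x)
    _ ≤ ∑ _q ∈ A.offDiag, 1 := by
        refine sum_le_sum fun q hq => card_le_one.2 fun x hx y hy => ?_
        obtain ⟨hg, hh, hne⟩ := mem_offDiag.1 hq
        rw [mem_filter] at hx hy
        exact hf q.1 hg q.2 hh hne x hx.1 y hy.1 hx.2 hy.2
    _ ≤ #A ^ 2 := by
        rw [sum_const, smul_eq_mul, mul_one, offDiag_card, sq]
        exact Nat.sub_le _ _

lemma exists_card_mul_card_le_card_image_mul {f : ι → X → Y} {A : Finset ι} {D : Finset X}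
    (hD : D.Nonempty)
    (hf : ∀ g ∈ A, ∀ h ∈ A, g ≠ h → ∀ x ∈ D, ∀ y ∈ D, f g x = f h x → f g y = f h y → x = y) :
    ∃ x ∈ D, #A * #D ≤ #(A.image (f · x)) * (#D + #A) := by
  obtain ⟨x, hx, hmin⟩ := exists_min_image D (fun x => #{q ∈ A.offDiag | f q.1 x = f q.2 x}) hD
  refine ⟨x, hx, ?_⟩
  set collisions := #{q ∈ A.offDiag | f q.1 x = f q.2 x}
  set m := #(A.image (f · x))
  obtain hA | hA := Nat.eq_zero_or_pos #A
  · simp [hA]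
  have hcollisions : #D * collisions ≤ #A ^ 2 :=
    (card_nsmul_le_sum D _ _ hmin).trans (sum_card_offDiag_filter_le hf)
  refine Nat.le_of_mul_le_mul_left ?_ hA
  calc #A * (#A * #D) = #A ^ 2 * #D := by ring
    _ ≤ m * (#A + collisions) * #D := Nat.mul_le_mul_right _ (sq_card_le_card_image_mul _ A)
    _ = m * (#A * #D + #D * collisions) := by ring
    _ ≤ m * (#A * #D + #A ^ 2) := by gcongr
    _ = #A * (m * (#D + #A)) := by ring

end Counting

section Group

open Finset

variable {G : Type*} [Group G] [DecidableEq G] {A : Finset G}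

lemma card_mul_card_image_le_card_mul {H : Type*} [Group H] [DecidableEq H] (f : G →* H)
    {B : Finset G} {c : H} (hB : ∀ b ∈ B, f b = c) : #B * #(A.image f) ≤ #(B * A) := by
  have hsection : ∀ h : H, ∃ g, h ∈ A.image f → g ∈ A ∧ f g = h := fun h => by
    by_cases hh : h ∈ A.image f
    · exact (mem_image.1 hh).imp fun g hg _ => hg
    · exact ⟨1, fun h => absurd h hh⟩
  choose s hs using hsection
  rw [← card_product]
  refine card_le_card_of_injOn (fun q => q.1 * s q.2) (fun q hq => ?_) ?_
  · exact mul_mem_mul (mem_product.1 hq).1 (hs _ (mem_product.1 hq).2).1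
  · rintro ⟨b, h⟩ hq ⟨b', h'⟩ hq' heq
    obtain ⟨hb, hh⟩ := mem_product.1 hq
    obtain ⟨hb', hh'⟩ := mem_product.1 hq'
    have hf := congrArg f heq
    simp only [map_mul, hB b hb, hB b' hb', (hs h hh).2, (hs h' hh').2] at hf
    obtain rfl := mul_left_cancel hf
    exact Prod.ext (mul_right_cancel heq) rfl

lemma exists_mem_sq_smul_eq_self {X : Type*} [MulAction G X] (hsym : A⁻¹ = A) {x : X}
    (hx : ¬ Set.InjOn (· • x) (A : Set G)) : ∃ u ∈ A ^ 2, u ≠ 1 ∧ u • x = x := by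
  simp only [Set.InjOn, mem_coe, not_forall] at hx
  obtain ⟨g, hg, h, hh, heq, hne⟩ := hx
  refine ⟨h⁻¹ * g, ?_, fun hone => hne (inv_mul_eq_one.1 hone).symm, ?_⟩
  · rw [sq]
    exact mul_mem_mul (hsym ▸ inv_mem_inv hh) hg
  · rw [mul_smul, inv_smul_eq_iff]
    exact heq

lemma exists_subgroup_coe_eq_sq (hsym : A⁻¹ = A) (hA : 2 * #(A ^ 3) < 3 * #A) :
    ∃ H : Subgroup G, (H : Set G) = ↑(A ^ 2) := by
  have hdoubling : (#(A * A) : ℚ) < (3 / 2 : ℚ) * #A := by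
    have hmono : #(A * A) ≤ #(A ^ 3) := by
      rw [← sq]
      exact card_pow_mono (by norm_num) (by norm_num)
    have : (2 * #(A * A) : ℚ) < 3 * #A := by exact_mod_cast (by omega : 2 * #(A * A) < 3 * #A)
    linarith
  exact ⟨invMulSubgroup A hdoubling, by rw [invMulSubgroup]; simp [hsym, sq]⟩

lemma one_le_card_pow_three_div_card (hA : A.Nonempty) : (1 : ℝ) ≤ (#(A ^ 3) : ℝ) / #A := by
  rw [one_le_div (by exact_mod_cast hA.card_pos)]
  exact_mod_cast card_le_card_pow three_ne_zero

lemma card_pow_five_le (hsym : A⁻¹ = A) :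
    (#(A ^ 5) : ℝ) ≤ ((#(A ^ 3) : ℝ) / #A) ^ 3 * #A := by
  obtain rfl | hA := A.eq_empty_or_nonempty
  · simp
  exact small_pow_of_small_tripling (by norm_num)
    (div_mul_cancel₀ _ (by exact_mod_cast hA.card_pos.ne')).ge hsym

end Group

namespace Aff

open Finset

section Action

variable {F : Type*} [Field F]

instance : MulAction (Aff F) F where
  smul g x := g.a * x + g.b
  one_smul x := by
    change ((1 : Fˣ) : F) * x + 0 = x
    simp
  mul_smul g h x := by
    change ((g.a * h.a : Fˣ) : F) * x + (g.a * h.b + g.b) = g.a * (h.a * x + h.b) + g.b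
    push_cast
    ring

lemma smul_def (g : Aff F) (x : F) : g • x = g.a * x + g.b := rfl

lemma smul_eq_self_iff {g : Aff F} {x : F} : g • x = x ↔ g.b = x * (1 - (g.a : F)) := by
  rw [smul_def, ← eq_sub_iff_add_eq', mul_sub, mul_one, mul_comm x]

/-- The homomorphism `π : Aff(F) → F*` sending an affine map to its slope. -/
def linearPart : Aff F →* Fˣ where
  toFun := a
  map_one' := rfl
  map_mul' _ _ := rfl

lemma smul_sub_smul (g : Aff F) (x y : F) : g • x - g • y = g.a * (x - y) := by
  rw [smul_def, smul_def]
  ring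

lemma eq_of_smul_eq_of_smul_eq {g h : Aff F} (hne : g ≠ h) {x y : F} (hx : g • x = h • x)
    (hy : g • y = h • y) : x = y := by
  by_contra hxy
  have hslope : (g.a : F) = h.a :=
    mul_right_cancel₀ (sub_ne_zero.2 hxy) (by rw [← smul_sub_smul, ← smul_sub_smul, hx, hy])
  refine hne (Aff.ext (Units.ext hslope) ?_)
  rwa [smul_def, smul_def, hslope, add_right_inj] at hx

lemma exists_smul_eq_smul {g h : Aff F} (ha : g.a ≠ h.a) : ∃ x : F, g • x = h • x := by
  have hne : (g.a : F) - h.a ≠ 0 := sub_ne_zero.2 (Units.val_injective.ne ha)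
  refine ⟨(h.b - g.b) / (g.a - h.a), ?_⟩
  rw [smul_def, smul_def]
  field_simp
  ring

lemma a_ne_one_of_smul_eq_self {u : Aff F} (hu : u ≠ 1) {x : F} (hx : u • x = x) : u.a ≠ 1 := by
  intro ha
  refine hu (Aff.ext ha ?_)
  rw [smul_eq_self_iff.1 hx, ha, Units.val_one, sub_self, mul_zero, one_b]

/-- The homothety with ratio `α` and centre `z`, that is `x ↦ z + α (x - z)`. -/
def homothety (α : Fˣ) (z : F) : Aff F := ⟨α, z * (1 - (α : F))⟩

lemma eq_homothety_of_smul_eq_self {g : Aff F} {x : F} (hx : g • x = x) : g = homothety g.a x :=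
  Aff.ext rfl (smul_eq_self_iff.1 hx)

lemma one_sub_ne_zero {α : Fˣ} (hα : α ≠ 1) : 1 - (α : F) ≠ 0 :=
  sub_ne_zero.2 fun h => hα (Units.ext h.symm)

lemma homothety_injective {α : Fˣ} (hα : α ≠ 1) :
    Function.Injective (homothety α : F → Aff F) := by
  intro z w hzw
  exact mul_right_cancel₀ (one_sub_ne_zero hα) (congrArg b hzw)

lemma conj_homothety (k : Aff F) (α : Fˣ) (z : F) :
    k * homothety α z * k⁻¹ = homothety α (k • z) := by
  ext
  · simp [homothety]
  · simp only [homothety, mul_a, mul_b, inv_b, smul_def]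
    push_cast
    field_simp
    ring

lemma homothety_mul_inv_homothety (α : Fˣ) (z w : F) :
    homothety α z * (homothety α w)⁻¹ = ⟨1, (z - w) * (1 - (α : F))⟩ := by
  ext
  · simp [homothety]
  · simp only [homothety, mul_b, inv_b, mul_neg, Units.mul_inv_cancel_left]
    ring

lemma exists_homothety_mul_inv_homothety_eq [Fintype F] {S : Finset F}
    (hS : Fintype.card F < 2 * #S) {α : Fˣ} (hα : α ≠ 1) (t : F) :
    ∃ z ∈ S, ∃ w ∈ S, homothety α z * (homothety α w)⁻¹ = ⟨1, t⟩ := by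
  classical
  obtain ⟨z, hz⟩ := inter_nonempty_of_card_lt_card_add_card (subset_univ S)
    (subset_univ (S.image (· + t / (1 - (α : F))))) <| by
      rwa [card_image_of_injective _ (add_left_injective _), ← two_mul, card_univ]
  obtain ⟨hzS, hz⟩ := mem_inter.1 hz
  obtain ⟨w, hw, rfl⟩ := mem_image.1 hz
  refine ⟨_, hzS, w, hw, ?_⟩
  rw [homothety_mul_inv_homothety, add_sub_cancel_left, div_mul_cancel₀ _ (one_sub_ne_zero hα)]

lemma translation_pow (t : F) (n : ℕ) : (⟨1, t⟩ : Aff F) ^ n = ⟨1, n * t⟩ := by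
  induction n with
  | zero => ext <;> simp
  | succ n ih => ext <;> simp [pow_succ, ih]; ring

lemma orderOf_translation (p : ℕ) [Fact p.Prime] [CharP F p] {t : F} (ht : t ≠ 0) :
    orderOf (⟨1, t⟩ : Aff F) = p := by
  refine orderOf_eq_prime ?_ fun hone => ht (congrArg b hone)
  rw [translation_pow, CharP.cast_eq_zero, zero_mul]
  rfl

lemma exists_forall_smul_eq_self_or_forall_a_eq_one {A : Set (Aff F)}
    (hcomm : ∀ g ∈ A, ∀ h ∈ A, Commute g h) :
    (∃ x : F, ∀ g ∈ A, g • x = x) ∨ ∀ g ∈ A, g.a = 1 := by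
  refine or_iff_not_imp_right.2 fun hA => ?_
  push Not at hA
  obtain ⟨h, hh, ha⟩ := hA
  have hne : h ≠ 1 := fun h1 => ha (h1 ▸ one_a)
  obtain ⟨x, hx⟩ := exists_smul_eq_smul (h := 1) ha
  refine ⟨x, fun g hg => eq_of_smul_eq_of_smul_eq hne ?_ hx⟩
  rw [one_smul] at hx ⊢
  rw [← mul_smul, (hcomm g hg h hh).symm.eq, mul_smul, hx]

lemma commute_of_commutator_mem {H : Subgroup (Aff F)} (hH : ∀ τ ∈ H, τ.a = 1 → τ = 1)
    {g h : Aff F} (hgh : g * h * g⁻¹ * h⁻¹ ∈ H) : Commute g h := by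
  have hone := hH _ hgh (by simp [mul_comm g.a h.a])
  rwa [mul_inv_eq_one, mul_inv_eq_iff_eq_mul] at hone

end Action

section Collisions

variable {F : Type*} [Field F] [Fintype F] {A : Finset (Aff F)}

lemma not_injOn_smul_of_card_lt (hcard : Fintype.card F < #A) (x : F) :
    ¬ Set.InjOn (· • x) (A : Set (Aff F)) := fun hinj =>
  hcard.not_ge (card_le_card_of_injOn _ (fun _ _ => mem_univ _) hinj)

open scoped Classical in
/-- The points of `F` at which two elements of `A` take the same value. Identifying `x ↦ ax + b`
with the point `(a, b)` of the plane, these are the directions determined by `A`, apart from the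
vertical one. -/
noncomputable def collisionPoints (A : Finset (Aff F)) : Finset F :=
  {x | ¬ Set.InjOn (· • x) (A : Set (Aff F))}

lemma mem_collisionPoints {x : F} :
    x ∈ collisionPoints A ↔ ¬ Set.InjOn (· • x) (A : Set (Aff F)) := by
  simp [collisionPoints]

lemma collisionPoints_eq_univ (hcard : Fintype.card F < #A) : collisionPoints A = univ :=
  eq_univ_iff_forall.2 fun x => mem_collisionPoints.2 (not_injOn_smul_of_card_lt hcard x)

open Polynomial in
lemma card_lt_two_mul_card_collisionPoints {p : ℕ} [CharP F p] (hcard : #A ≤ p) {x : F}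
    (hx : x ∈ collisionPoints A) (hconst : ∃ g ∈ A, ∃ h ∈ A, g • x ≠ h • x) :
    #A < 2 * #(collisionPoints A) := by
  set m := A.val.map fun g => C (g.a : F) * X + C g.b
  have hmcard : m.card = #A := Multiset.card_map _ _
  have heval : ∀ y, m.map (eval y) = A.val.map (· • y) := fun y => by
    simp [m, smul_def]
  have hnodup : ∀ y, (m.map (eval y)).Nodup ↔ y ∉ collisionPoints A := fun y => by
    rw [heval, nodup_map_iff_injOn, mem_collisionPoints, not_not]
  rw [← hmcard] at hcard ⊢
  refine card_lt_two_mul_card_of_nodup_map_eval ?_ hcard (fun y => (hnodup y).2)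
    (fun h => (hnodup x).1 h hx) ?_
  · simp only [m, Multiset.mem_map, forall_exists_index, and_imp, forall_apply_eq_imp_iff₂]
    exact fun g _ => natDegree_linear_le
  · obtain ⟨g, hg, h, hh, hgh⟩ := hconst
    refine ⟨_, Multiset.mem_map_of_mem _ hg, _, Multiset.mem_map_of_mem _ hh, ?_⟩
    simpa [smul_def] using hgh

end Collisions

section Growth

variable {F : Type*} [Field F] [DecidableEq F] {A : Finset (Aff F)}

lemma homothety_mem_pow_four (hsym : A⁻¹ = A) {u : Aff F} (hu : u ∈ A ^ 2) {x : F}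
    (hx : u • x = x) {z : F} (hz : z ∈ A.image (· • x)) : homothety u.a z ∈ A ^ 4 := by
  obtain ⟨k, hk, rfl⟩ := mem_image.1 hz
  rw [← conj_homothety, ← eq_homothety_of_smul_eq_self hx, pow_succ, pow_succ']
  exact mul_mem_mul (mul_mem_mul hk hu) (hsym ▸ inv_mem_inv hk)

lemma card_orbit_mul_card_image_a_le (hsym : A⁻¹ = A) {x : F}
    (hx : ¬ Set.InjOn (· • x) (A : Set (Aff F))) :
    #(A.image (· • x)) * #(A.image a) ≤ #(A ^ 5) := by
  obtain ⟨u, hu, hne, hux⟩ := exists_mem_sq_smul_eq_self hsym hx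
  set B := (A.image (· • x)).image (homothety u.a)
  have hB : #B = #(A.image (· • x)) :=
    card_image_of_injective _ (homothety_injective (a_ne_one_of_smul_eq_self hne hux))
  have hBA : B * A ⊆ A ^ 5 := by
    rw [pow_succ]
    exact mul_subset_mul_right
      (image_subset_iff.2 fun z hz => homothety_mem_pow_four hsym hu hux hz)
  rw [← hB]
  refine (card_mul_card_image_le_card_mul linearPart (c := u.a) ?_).trans (card_le_card hBA)
  exact forall_mem_image.2 fun z _ => rfl

lemma translation_mem_pow_eight_of_card_lt [Fintype F] (hsym : A⁻¹ = A) {x : F}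
    (hx : ¬ Set.InjOn (· • x) (A : Set (Aff F)))
    (hcard : Fintype.card F < 2 * #(A.image (· • x))) (t : F) :
    (⟨1, t⟩ : Aff F) ∈ A ^ 8 := by
  obtain ⟨u, hu, hne, hux⟩ := exists_mem_sq_smul_eq_self hsym hx
  obtain ⟨z, hz, w, hw, hzw⟩ :=
    exists_homothety_mul_inv_homothety_eq hcard (a_ne_one_of_smul_eq_self hne hux) t
  have hsym4 : (A ^ 4)⁻¹ = A ^ 4 := by rw [← inv_pow, hsym]
  rw [← hzw, show 8 = 4 + 4 from rfl, pow_add]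
  exact mul_mem_mul (homothety_mem_pow_four hsym hu hux hz)
    (hsym4 ▸ inv_mem_inv (homothety_mem_pow_four hsym hu hux hw))

lemma eq_or_forall_a_eq_neg_one_of_forall_smul_eq (hsym : A⁻¹ = A) {x z : F}
    (hz : ∀ g ∈ A, g • x = z) : z = x ∨ ∀ g ∈ A, g.a = -1 := by
  refine or_iff_not_imp_left.2 fun hzx g hg => Units.ext ?_
  have hgz : g • z = x := by
    rw [← hz g⁻¹ (hsym ▸ inv_mem_inv hg), smul_inv_smul]
  have hslope := smul_sub_smul g z x
  rw [hgz, hz g hg, ← neg_sub z x, neg_eq_neg_one_mul] at hslope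
  simpa using (mul_right_cancel₀ (sub_ne_zero.2 hzx) hslope).symm

lemma card_mul_card_image_a_le_of_subset_sq {T : Finset (Aff F)} (hT : T ⊆ A ^ 2)
    (hT1 : ∀ τ ∈ T, τ.a = 1) : #T * #(A.image a) ≤ #(A ^ 3) := by
  refine (card_mul_card_image_le_card_mul linearPart hT1).trans (card_le_card ?_)
  rw [pow_succ]
  exact mul_subset_mul_right hT

lemma char_mul_card_image_a_le (p : ℕ) [Fact p.Prime] [CharP F p] {H : Subgroup (Aff F)}
    (hH : (H : Set (Aff F)) = ↑(A ^ 2)) {t : F} (ht : t ≠ 0) (htH : ⟨1, t⟩ ∈ H) :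
    p * #(A.image a) ≤ #(A ^ 3) := by
  set T := (range p).image ((⟨1, t⟩ : Aff F) ^ ·)
  have hTcard : #T = p := by
    refine (card_image_of_injOn ?_).trans (card_range p)
    rw [coe_range]
    nth_rewrite 1 [← orderOf_translation p ht]
    exact pow_injOn_Iio_orderOf
  have hTA : T ⊆ A ^ 2 := by
    rw [← coe_subset, ← hH]
    exact fun τ hτ => forall_mem_image.2 (fun n _ => H.pow_mem htH n) τ hτ
  rw [← hTcard]
  exact card_mul_card_image_a_le_of_subset_sq hTA
    (forall_mem_image.2 fun n _ => by rw [translation_pow])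

lemma commute_of_coe_eq_sq (hsym : A⁻¹ = A) {H : Subgroup (Aff F)}
    (hH : (H : Set (Aff F)) = ↑(A ^ 2)) (hH1 : ∀ τ ∈ H, τ.a = 1 → τ = 1) {g h : Aff F}
    (hg : g ∈ A) (hh : h ∈ A) : Commute g h := by
  have hmul : ∀ g ∈ A, ∀ h ∈ A, g * h ∈ H := fun g hg h hh => by
    rw [← SetLike.mem_coe, hH, mem_coe, sq]
    exact mul_mem_mul hg hh
  have hinv : ∀ g ∈ A, g⁻¹ ∈ A := fun g hg => hsym ▸ inv_mem_inv hg
  refine commute_of_commutator_mem hH1 ?_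
  rw [mul_assoc (g * h)]
  exact H.mul_mem (hmul g hg h hh) (hmul _ (hinv g hg) _ (hinv h hh))

lemma card_image_a_le_one_of_forall_a_eq {α : Fˣ} (hA : ∀ g ∈ A, g.a = α) : #(A.image a) ≤ 1 :=
  card_le_one_iff_subset_singleton.2
    ⟨α, image_subset_iff.2 fun g hg => mem_singleton.2 (hA g hg)⟩

lemma exists_fixedPoint_or_card_image_a_le_one (p : ℕ) [Fact p.Prime] [CharP F p]
    (hsym : A⁻¹ = A) (hcard : #A ≤ p) (htripling : 2 * #(A ^ 3) < 3 * #A) :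
    (∃ x : F, ∀ g ∈ A, g • x = x) ∨ #(A.image a) ≤ 1 := by
  obtain ⟨H, hH⟩ := exists_subgroup_coe_eq_sq hsym htripling
  by_cases htrans : ∀ τ ∈ H, τ.a = 1 → τ = 1
  · exact (exists_forall_smul_eq_self_or_forall_a_eq_one (A := A) fun g hg h hh =>
      commute_of_coe_eq_sq hsym hH htrans hg hh).imp_right card_image_a_le_one_of_forall_a_eq
  · push Not at htrans
    obtain ⟨⟨_, t⟩, hτ, rfl, hne⟩ := htrans
    have hp := char_mul_card_image_a_le p hH (fun ht => hne (Aff.ext rfl ht)) hτ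
    exact Or.inr (by nlinarith)

section Finite

variable [Fintype F]

lemma exists_card_lt_two_mul_card_orbit (hcard : Fintype.card F < #A) :
    ∃ x : F, Fintype.card F < 2 * #(A.image (· • x)) := by
  obtain ⟨x, -, hx⟩ := exists_card_mul_card_le_card_image_mul (A := A) (f := (· • ·))
    (univ_nonempty (α := F)) fun g _ h _ hne x _ y _ => eq_of_smul_eq_of_smul_eq hne
  refine ⟨x, ?_⟩
  rw [card_univ] at hx
  by_contra hle
  nlinarith [Fintype.card_pos (α := F)]

lemma translation_mem_pow_eight (hsym : A⁻¹ = A) (hcard : Fintype.card F < #A) (t : F) :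
    (⟨1, t⟩ : Aff F) ∈ A ^ 8 := by
  obtain ⟨x, hx⟩ := exists_card_lt_two_mul_card_orbit hcard
  exact translation_mem_pow_eight_of_card_lt hsym (not_injOn_smul_of_card_lt hcard x) hx t

lemma card_mul_card_image_a_le_two_mul_card_pow_five (hsym : A⁻¹ = A)
    (hcard : Fintype.card F < #A) : Fintype.card F * #(A.image a) ≤ 2 * #(A ^ 5) := by
  obtain ⟨x, hx⟩ := exists_card_lt_two_mul_card_orbit hcard
  calc Fintype.card F * #(A.image a) ≤ 2 * #(A.image (· • x)) * #(A.image a) := by gcongr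
    _ = 2 * (#(A.image (· • x)) * #(A.image a)) := mul_assoc _ _ _
    _ ≤ 2 * #(A ^ 5) := by
        gcongr
        exact card_orbit_mul_card_image_a_le hsym (not_injOn_smul_of_card_lt hcard x)

lemma card_image_a_le_two_of_card_lt (hsym : A⁻¹ = A) (hlt : Fintype.card F < #A)
    (hle : #A ≤ 2 * Fintype.card F) (htripling : 2 * #(A ^ 3) < 3 * #A) :
    #(A.image a) ≤ 2 := by
  obtain ⟨H, hH⟩ := exists_subgroup_coe_eq_sq hsym htripling
  set T := univ.image fun t : F => (⟨1, t⟩ : Aff F)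
  have hTcard : #T = Fintype.card F :=
    card_image_of_injective _ fun _ _ hst => congrArg b hst
  have hTA : T ⊆ A ^ 2 := by
    refine image_subset_iff.2 fun t _ => ?_
    have ht := translation_mem_pow_eight hsym hlt t
    rwa [pow_mul A 2 4, ← mem_coe, coe_pow, ← hH, coe_set_pow four_ne_zero, hH, mem_coe] at ht
  have hT := card_mul_card_image_a_le_of_subset_sq hTA (forall_mem_image.2 fun t _ => rfl)
  rw [hTcard] at hT
  by_contra hgt
  nlinarith

lemma card_le_two_mul_card_collisionPoints {p : ℕ} [CharP F p] (hsym : A⁻¹ = A) (hcard : #A ≤ p)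
    (hfix : ¬ ∃ x : F, ∀ g ∈ A, g • x = x) (hslopes : 1 < #(A.image a)) :
    #A ≤ 2 * #(collisionPoints A) := by
  obtain ⟨_, hα, _, hβ, hne⟩ := one_lt_card.1 hslopes
  obtain ⟨g, hg, rfl⟩ := mem_image.1 hα
  obtain ⟨h, hh, rfl⟩ := mem_image.1 hβ
  obtain ⟨x, hx⟩ := exists_smul_eq_smul hne
  have hxcoll : x ∈ collisionPoints A :=
    mem_collisionPoints.2 fun hinj => hne (congrArg a (hinj hg hh hx))
  refine (card_lt_two_mul_card_collisionPoints hcard hxcoll ?_).le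
  by_contra! hconst
  obtain hfixed | hneg := eq_or_forall_a_eq_neg_one_of_forall_smul_eq hsym
    fun k hk => hconst k hk g hg
  · exact hfix ⟨x, fun k hk => (hconst k hk g hg).trans hfixed⟩
  · exact hne ((hneg g hg).trans (hneg h hh).symm)

lemma card_image_a_mul_card_le_three_mul_card_pow_five (hsym : A⁻¹ = A)
    (hcoll : #A ≤ 2 * #(collisionPoints A)) : #(A.image a) * #A ≤ 3 * #(A ^ 5) := by
  obtain rfl | hA := A.eq_empty_or_nonempty
  · simp
  have hcollpos : 0 < #(collisionPoints A) := by
    have := hA.card_pos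
    omega
  obtain ⟨x, hx, hcard⟩ := exists_card_mul_card_le_card_image_mul (A := A) (f := (· • ·))
    (card_pos.1 hcollpos) fun g _ h _ hne x _ y _ => eq_of_smul_eq_of_smul_eq hne
  have horbit : #A ≤ 3 * #(A.image (· • x)) := by
    by_contra hlt
    nlinarith
  have hgrowth := card_orbit_mul_card_image_a_le hsym (mem_collisionPoints.1 hx)
  nlinarith

lemma card_image_a_le_two_mul_pow_four (hsym : A⁻¹ = A)
    (hcoll : #A ≤ 2 * #(collisionPoints A))
    (hsmall : 2 * #(A ^ 3) < 3 * #A → #(A.image a) ≤ 2) :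
    (#(A.image a) : ℝ) ≤ 2 * ((#(A ^ 3) : ℝ) / #A) ^ 4 := by
  obtain rfl | hA := A.eq_empty_or_nonempty
  · simp
  have hApos : (0 : ℝ) < #A := by exact_mod_cast hA.card_pos
  have hK1 := one_le_card_pow_three_div_card hA
  set K := (#(A ^ 3) : ℝ) / #A with hK
  obtain hlt | hge := lt_or_ge (2 * #(A ^ 3)) (3 * #A)
  · calc (#(A.image a) : ℝ) ≤ 2 := by exact_mod_cast hsmall hlt
      _ ≤ 2 * K ^ 4 := le_mul_of_one_le_right zero_le_two (one_le_pow₀ hK1)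
  · have hK2 : 3 / 2 ≤ K := by
      rw [hK, div_le_div_iff₀ two_pos hApos, mul_comm (#(A ^ 3) : ℝ)]
      exact_mod_cast hge
    have hcube : (#(A.image a) : ℝ) ≤ 3 * K ^ 3 := by
      refine le_of_mul_le_mul_right ?_ hApos
      calc (#(A.image a) * #A : ℝ) ≤ 3 * #(A ^ 5) := by
            exact_mod_cast card_image_a_mul_card_le_three_mul_card_pow_five hsym hcoll
        _ ≤ 3 * (K ^ 3 * #A) := by gcongr; exact card_pow_five_le hsym
        _ = 3 * K ^ 3 * #A := (mul_assoc _ _ _).symm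
    calc (#(A.image a) : ℝ) ≤ 3 * K ^ 3 := hcube
      _ = 2 * (3 / 2) * K ^ 3 := by norm_num
      _ ≤ 2 * K * K ^ 3 := by gcongr
      _ = 2 * K ^ 4 := by ring

lemma card_image_a_le_two_mul_pow_four_of_card_lt (hsym : A⁻¹ = A) (hlt : Fintype.card F < #A)
    (hle : #A ≤ 2 * Fintype.card F) :
    (#(A.image a) : ℝ) ≤ 2 * ((#(A ^ 3) : ℝ) / #A) ^ 4 :=
  card_image_a_le_two_mul_pow_four hsym (by rwa [collisionPoints_eq_univ hlt, card_univ])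
    (card_image_a_le_two_of_card_lt hsym hlt hle)

lemma card_image_a_le_two_mul_pow_three (hsym : A⁻¹ = A) (hcard : Fintype.card F < #A) :
    (#(A.image a) : ℝ) ≤ 2 * ((#(A ^ 3) : ℝ) / #A) ^ 3 * #A / Fintype.card F := by
  rw [le_div_iff₀ (by exact_mod_cast Fintype.card_pos), mul_comm, mul_assoc]
  calc (Fintype.card F * #(A.image a) : ℝ) ≤ 2 * #(A ^ 5) := by
        exact_mod_cast card_mul_card_image_a_le_two_mul_card_pow_five hsym hcard
    _ ≤ 2 * (((#(A ^ 3) : ℝ) / #A) ^ 3 * #A) := by gcongr; exact card_pow_five_le hsym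

end Finite

lemma card_image_a_le_two_mul_pow_four_of_card_le_char [Finite F] (p : ℕ) [CharP F p]
    (hsym : A⁻¹ = A) (hcard : #A ≤ p) (hfix : ¬ ∃ x : F, ∀ g ∈ A, g • x = x) :
    (#(A.image a) : ℝ) ≤ 2 * ((#(A ^ 3) : ℝ) / #A) ^ 4 := by
  have := Fintype.ofFinite F
  have : Fact p.Prime := ⟨CharP.char_is_prime F p⟩
  obtain hslopes | hslopes := lt_or_ge 1 #(A.image a)
  · refine card_image_a_le_two_mul_pow_four hsym
      (card_le_two_mul_card_collisionPoints hsym hcard hfix hslopes) fun htripling => ?_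
    have := (exists_fixedPoint_or_card_image_a_le_one p hsym hcard htripling).resolve_left hfix
    omega
  · have hA : A.Nonempty := nonempty_iff_ne_empty.2 fun hA => hfix ⟨0, by simp [hA]⟩
    have hK : 1 ≤ ((#(A ^ 3) : ℝ) / #A) ^ 4 := one_le_pow₀ (one_le_card_pow_three_div_card hA)
    have : (#(A.image a) : ℝ) ≤ 1 := by exact_mod_cast hslopes
    linarith

end Growth

end Aff

theorem growth_in_Aff_general {F : Type*} [Field F] [Fintype F] [DecidableEq F] (p : ℕ) [CharP F p]
    (A : Finset (Aff F)) (hsym : A⁻¹ = A) :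
    (∃ x : F, ∀ g ∈ A, g.b = x * (1 - (g.a : F))) ∨
    ((A.card ≤ p ∨ Fintype.card F < A.card ∧ A.card ≤ 2 * Fintype.card F →
        ((A.image Aff.a).card : ℝ) ≤ 2 * (((A ^ 3).card : ℝ) / (A.card : ℝ)) ^ 4) ∧
     (Fintype.card F < A.card →
        ((A.image Aff.a).card : ℝ) ≤
            2 * (((A ^ 3).card : ℝ) / (A.card : ℝ)) ^ 3 * (A.card : ℝ) / (Fintype.card F : ℝ) ∧
          ∀ t : F, (⟨1, t⟩ : Aff F) ∈ A ^ 8)) := by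
  simp only [← Aff.smul_eq_self_iff]
  refine or_iff_not_imp_left.2 fun hfix => ⟨?_, fun hcard => ?_⟩
  · rintro (hcard | ⟨hlt, hle⟩)
    · exact Aff.card_image_a_le_two_mul_pow_four_of_card_le_char p hsym hcard hfix
    · exact Aff.card_image_a_le_two_mul_pow_four_of_card_lt hsym hlt hle
  · exact ⟨Aff.card_image_a_le_two_mul_pow_three hsym hcard,
      Aff.translation_mem_pow_eight hsym hcard⟩

/-- **Theorem 1.6** (growth in Aff(F_p)): let `p` be an odd prime, `A` a finite nonempty
symmetric subset of `Aff(F_p)` and `K = |A³|/|A|`. Then either (i) `A ⊆ Stab(x)` for some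
`x ∈ F_p`, or both: (ii) if `|A| ≤ 2p` then `|π(A)| ≤ 2K⁴`; and (iii) if `|A| > 4p` then
`|π(A)| ≤ 2K³·|A|/p` and `A⁸` contains the unipotent axis `{(1, t) : t ∈ F_p}`. -/
theorem growth_in_Aff
    (p : ℕ) [Fact p.Prime] (hodd : Odd p)
    (A : Finset (Aff (ZMod p))) (hA : A.Nonempty) (hsym : A⁻¹ = A) :
    (∃ x : ZMod p, ∀ g ∈ A, g.b = x * (1 - (g.a : ZMod p))) ∨
    ((A.card ≤ 2 * p →
        ((A.image Aff.a).card : ℝ) ≤ 2 * (((A ^ 3).card : ℝ) / (A.card : ℝ)) ^ 4) ∧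
     (4 * p < A.card →
        ((A.image Aff.a).card : ℝ) ≤
            2 * (((A ^ 3).card : ℝ) / (A.card : ℝ)) ^ 3 * (A.card : ℝ) / (p : ℝ) ∧
          ∀ t : ZMod p, (⟨1, t⟩ : Aff (ZMod p)) ∈ A ^ 8)) := by
  refine (growth_in_Aff_general p A hsym).imp_right fun ⟨hslopes, haxis⟩ => ?_
  rw [ZMod.card] at hslopes haxis
  exact ⟨fun hcard => hslopes ((le_or_gt A.card p).imp_right fun hlt => ⟨hlt, hcard⟩),
    fun hcard => haxis (by omega)⟩
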